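/- Canonical triangular solution of the untwisted reflection equation: let (m, σ) ∈ Σ^tri_N, α ∈ ℂ, and let ε_{i,σ(i)}, ε_{σ(i),i} ∈ {0,1} for each i be chosen so that ε_{i,i} = 0 and ε_{i,σ(i)} + ε_{σ(i),i} = 1 whenever i ≠ σ(i). Then the matrix-valued function K(u) = I + ((u−u^{-1})/(α−u)) Σ_{m<i≤N} ( E_{ii} + ε_{i,σ(i)} E_{i,σ(i)} + ε_{σ(i),i} E_{σ(i),i} ) satisfies the untwisted reflection equation (RE) for all u, v for which all factors are defined. -/

import Mathlib

/-!
Write `λ = q - q⁻¹` and `T = P R_q`. The matrix `T` satisfies the Hecke relation `T² = λ T + 1`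
(`Tmat_sq`), and `P R(x)` is a scalar multiple of `(1 - x) T + x λ` (`Pmat_mul_RBJ`). Since
`P K₁ P = K₂`, the reflection equation takes the braid form
`T(u/v) K₂(u) T(uv) K₂(v) = K₂(v) T(uv) K₂(u) T(u/v)` with `T(x) = (1 - x) T + x λ`.

Here `K(u) = 1 + c(u) Z` with `c(u) = (u - u⁻¹)/(α - u)` and `Z` independent of `u`. When `Z² = Z`
and `Z₂` satisfies the constant reflection equation `T Z₂ T Z₂ = Z₂ T Z₂ T`, the two sides of the
braid form differ by a multiple of `T Z₂ - Z₂ T` whose coefficient vanishes by a scalar identity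
for `c` (`braid_form`).

It remains to treat `Z`. The orbits of `σ` cut `Z` into blocks of size at most two: each orbit that
meets `{i > m}` has a largest element `k > m`, and contributes `E_{kk}` together with one of
`E_{kl}`, `E_{lk}` when it contains a second element `l ≤ m`. So a product `Z_{be} Z_{ed}` is
nonzero only when `e` is the top element of the orbit of `b` (`TriPattern.comp_iff`), which gives
`Z² = Z` and collapses the sums in `T Z₂ T Z₂` and `Z₂ T Z₂ T` to closed forms
(`TriPattern.TZTZ_apply`, `TriPattern.ZTZT_apply`). These agree because the blocks are nested: if
`l < k` and `l' < k'` are two orbits of this kind with `k < k'`, then `l' < l` and `l < k`.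
-/

open Matrix
open scoped Kronecker

noncomputable section

/-- 1-based matrix unit `E_{a b}` in the `N × N` complex matrices. -/
def Em (N : ℕ) (a b : ℕ) : Matrix (Fin N) (Fin N) ℂ :=
  Matrix.of fun i j => if (i : ℕ) + 1 = a ∧ (j : ℕ) + 1 = b then 1 else 0

/-- The flip (permutation) operator `P = Σ_{i,j} E_{ij} ⊗ E_{ji}`. -/
def Pmat (N : ℕ) : Matrix (Fin N × Fin N) (Fin N × Fin N) ℂ :=
  ∑ i ∈ Finset.Icc 1 N, ∑ j ∈ Finset.Icc 1 N, Em N i j ⊗ₖ Em N j i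

/-- The constant R-matrix `R_q`. -/
def Rconst (N : ℕ) (q : ℂ) : Matrix (Fin N × Fin N) (Fin N × Fin N) ℂ :=
  (∑ i ∈ Finset.Icc 1 N, ∑ j ∈ Finset.Icc 1 N,
      (if i = j then q else 1) • (Em N i i ⊗ₖ Em N j j))
    + ∑ i ∈ Finset.Icc 1 N, ∑ j ∈ Finset.Icc 1 N,
        (if i < j then q - q⁻¹ else 0) • (Em N i j ⊗ₖ Em N j i)

/-- `f_q(u) = 1/(q - q⁻¹ u)`. -/
def fBJ (q u : ℂ) : ℂ := (q - q⁻¹ * u)⁻¹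

/-- The Bazhanov–Jimbo R-matrix `R(u) = f_q(u) R_q + f_{q⁻¹}(u⁻¹) P R_{q⁻¹} P`. -/
def RBJ (N : ℕ) (q u : ℂ) : Matrix (Fin N × Fin N) (Fin N × Fin N) ℂ :=
  fBJ q u • Rconst N q + fBJ q⁻¹ u⁻¹ • (Pmat N * Rconst N q⁻¹ * Pmat N)

/-- `X1 = X ⊗ I`. -/
def M1 (N : ℕ) (X : Matrix (Fin N) (Fin N) ℂ) : Matrix (Fin N × Fin N) (Fin N × Fin N) ℂ :=
  X ⊗ₖ (1 : Matrix (Fin N) (Fin N) ℂ)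

/-- `X2 = I ⊗ X`. -/
def M2 (N : ℕ) (X : Matrix (Fin N) (Fin N) ℂ) : Matrix (Fin N × Fin N) (Fin N × Fin N) ℂ :=
  (1 : Matrix (Fin N) (Fin N) ℂ) ⊗ₖ X

/-- `R21(u) = P R(u) P`. -/
def R21 (N : ℕ) (q u : ℂ) : Matrix (Fin N × Fin N) (Fin N × Fin N) ℂ :=
  Pmat N * RBJ N q u * Pmat N

/-- Transposition in the first tensor factor. -/
def t1 (N : ℕ) (X : Matrix (Fin N × Fin N) (Fin N × Fin N) ℂ) :
    Matrix (Fin N × Fin N) (Fin N × Fin N) ℂ :=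
  Matrix.of fun p r => X (r.1, p.2) (p.1, r.2)

/-- The charge conjugation matrix `C = Σ_i (-q)^i E_{ī i}` where `ī = N+1-i`. -/
def Cmat (N : ℕ) (q : ℂ) : Matrix (Fin N) (Fin N) ℂ :=
  ∑ i ∈ Finset.Icc 1 N, (-q) ^ i • Em N (N + 1 - i) i

/-- The C-conjugated R-matrix `R^∨(u) = C2⁻¹ R^{t1}(q̃² u⁻¹) C2` with `q̃ = s^N`. -/
def Rvee (N : ℕ) (q s u : ℂ) : Matrix (Fin N × Fin N) (Fin N × Fin N) ℂ :=
  (M2 N (Cmat N q))⁻¹ * t1 N (RBJ N q ((s ^ N) ^ 2 * u⁻¹)) * M2 N (Cmat N q)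

/-- `R^∨21(u) = P R^∨(u) P`. -/
def Rvee21 (N : ℕ) (q s u : ℂ) : Matrix (Fin N × Fin N) (Fin N × Fin N) ℂ :=
  Pmat N * Rvee N q s u * Pmat N

/-- The untwisted reflection equation at spectral parameters `(u, v)`. -/
def REeq (N : ℕ) (q : ℂ) (K : ℂ → Matrix (Fin N) (Fin N) ℂ) (u v : ℂ) : Prop :=
  R21 N q (u / v) * M1 N (K u) * RBJ N q (u * v) * M2 N (K v)
    = M2 N (K v) * R21 N q (u * v) * M1 N (K u) * RBJ N q (u / v)

/-- `K` satisfies the untwisted reflection equation (RE) for all `u, v`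
for which all factors are defined. -/
def IsRESol (N : ℕ) (q : ℂ) (K : ℂ → Matrix (Fin N) (Fin N) ℂ) : Prop :=
  ∀ u v : ℂ, u ≠ 0 → v ≠ 0 → u / v ≠ q ^ 2 → u / v ≠ q⁻¹ ^ 2 →
    u * v ≠ q ^ 2 → u * v ≠ q⁻¹ ^ 2 → REeq N q K u v

/-- The cross-conjugated twisted reflection equation at `(u, v)`. -/
def CtREeq (N : ℕ) (q s : ℂ) (K : ℂ → Matrix (Fin N) (Fin N) ℂ) (u v : ℂ) : Prop :=
  R21 N q (u / v) * M1 N (K u) * Rvee N q s (u * v) * M2 N (K v)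
    = M2 N (K v) * Rvee21 N q s (u * v) * M1 N (K u) * RBJ N q (u / v)

/-- `K` satisfies the cross-conjugated twisted reflection equation (CtRE) for all
`u, v` for which all factors are defined. -/
def IsCtRESol (N : ℕ) (q s : ℂ) (K : ℂ → Matrix (Fin N) (Fin N) ℂ) : Prop :=
  ∀ u v : ℂ, u ≠ 0 → v ≠ 0 → u / v ≠ q ^ 2 → u / v ≠ q⁻¹ ^ 2 →
    (s ^ N) ^ 2 * (u * v)⁻¹ ≠ q ^ 2 → (s ^ N) ^ 2 * (u * v)⁻¹ ≠ q⁻¹ ^ 2 →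
    CtREeq N q s K u v

/-- Transposition across the antidiagonal: `(M^w)_{ij} = M_{N+1-j, N+1-i}`. -/
def wT (N : ℕ) (M : Matrix (Fin N) (Fin N) ℂ) : Matrix (Fin N) (Fin N) ℂ :=
  Matrix.of fun i j => M (Fin.rev j) (Fin.rev i)

/-! ### Braid form of the reflection equation -/

/-- The braid form of the reflection equation for `T(x) = (1-x)T + xλ`, with `a = u/v`, `b = uv`,
`K₂(u) = 1 + cZ` and `K₂(v) = 1 + dZ`. The difference of the two sides is a multiple of
`T Z - Z T`, and `hs` says that its coefficient is zero. -/
lemma braid_form {A : Type*} [Ring A] [Algebra ℂ A] (T Z : A) (l a b c d : ℂ)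
    (hT : T * T = l • T + 1) (hZ : Z * Z = Z) (hTZ : T * Z * T * Z = Z * T * Z * T)
    (hs : d * (1 - a * b) + c * (b - a) + (1 - a) * b * (c * d) = 0) :
    ((1 - a) • T + (a * l) • (1 : A)) * (1 + c • Z) * ((1 - b) • T + (b * l) • (1 : A)) *
        (1 + d • Z)
      = (1 + d • Z) * ((1 - b) • T + (b * l) • (1 : A)) * (1 + c • Z) *
        ((1 - a) • T + (a * l) • (1 : A)) := by
  simp only [mul_assoc] at hTZ
  rw [← sub_eq_zero]
  have h0 : (l * (d * (1 - a * b) + c * (b - a) + (1 - a) * b * (c * d))) •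
      (T * Z - Z * T) = 0 := by rw [hs, mul_zero, zero_smul]
  rw [← h0]
  simp only [mul_add, add_mul, smul_mul_assoc, mul_smul_comm, mul_one, one_mul, mul_assoc,
    hT, hZ, hTZ, smul_add]
  module

/-! ### Entries of the matrices -/

lemma Em_apply (N a b : ℕ) (i j : Fin N) :
    Em N a b i j = if (i : ℕ) + 1 = a ∧ (j : ℕ) + 1 = b then 1 else 0 := rfl

lemma Em_mul_Em (N : ℕ) (i j : ℕ) (a b c d : Fin N) (x : ℂ) (k l : ℕ) :
    x * (Em N i j a c * Em N k l b d) =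
      if (a : ℕ) + 1 = i ∧ (c : ℕ) + 1 = j ∧ (b : ℕ) + 1 = k ∧ (d : ℕ) + 1 = l then x else 0 := by
  simp only [Em_apply]
  split_ifs <;> simp_all

/-- A sum over 1-based indices supported at one pair of entries of `Fin N`. -/
lemma sum_pick (N : ℕ) (g : ℕ → ℕ → ℂ) (a b : Fin N) (p : Prop) [Decidable p] :
    (∑ i ∈ Finset.Icc 1 N, ∑ j ∈ Finset.Icc 1 N,
      if (a : ℕ) + 1 = i ∧ (b : ℕ) + 1 = j ∧ p then g i j else 0) =
      if p then g (a + 1) (b + 1) else 0 := by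
  rw [Finset.sum_eq_single ((a : ℕ) + 1), Finset.sum_eq_single ((b : ℕ) + 1)]
  · simp
  · intro j _ hj
    rw [if_neg]; rintro ⟨-, h, -⟩; exact hj h.symm
  · intro h; exact absurd (Finset.mem_Icc.2 ⟨by omega, by omega⟩) h
  · intro i _ hi
    refine Finset.sum_eq_zero fun j _ => ?_
    rw [if_neg]; rintro ⟨h, -⟩; exact hi h.symm
  · intro h; exact absurd (Finset.mem_Icc.2 ⟨by omega, by omega⟩) h

lemma sum_exchange_apply (N : ℕ) (g : ℕ → ℕ → ℂ) (a b c d : Fin N) :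
    (∑ i ∈ Finset.Icc 1 N, ∑ j ∈ Finset.Icc 1 N,
        g i j • (Em N i j ⊗ₖ Em N j i)) (a, b) (c, d)
      = if a = d ∧ b = c then g (a + 1) (b + 1) else 0 := by
  simp only [Matrix.sum_apply, Matrix.smul_apply, kroneckerMap_apply, smul_eq_mul, Em_mul_Em]
  rw [← sum_pick N g a b]
  refine Finset.sum_congr rfl fun i _ => Finset.sum_congr rfl fun j _ => if_congr ?_ rfl rfl
  simp only [Fin.ext_iff]; omega

lemma sum_diag_apply (N : ℕ) (g : ℕ → ℕ → ℂ) (a b c d : Fin N) :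
    (∑ i ∈ Finset.Icc 1 N, ∑ j ∈ Finset.Icc 1 N,
        g i j • (Em N i i ⊗ₖ Em N j j)) (a, b) (c, d)
      = if a = c ∧ b = d then g (a + 1) (b + 1) else 0 := by
  simp only [Matrix.sum_apply, Matrix.smul_apply, kroneckerMap_apply, smul_eq_mul, Em_mul_Em]
  rw [← sum_pick N g a b]
  refine Finset.sum_congr rfl fun i _ => Finset.sum_congr rfl fun j _ => if_congr ?_ rfl rfl
  simp only [Fin.ext_iff]; omega

lemma Pmat_apply (N : ℕ) (a b c d : Fin N) :
    Pmat N (a, b) (c, d) = if a = d ∧ b = c then 1 else 0 := by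
  have := sum_exchange_apply N (fun _ _ => 1) a b c d
  simp only [one_smul] at this
  exact this

lemma Rconst_apply (N : ℕ) (q : ℂ) (a b c d : Fin N) :
    Rconst N q (a, b) (c, d) = (if a = c ∧ b = d then (if a = b then q else 1) else 0) +
      (if a = d ∧ b = c then (if a < b then q - q⁻¹ else 0) else 0) := by
  rw [Rconst, Matrix.add_apply, sum_diag_apply N (fun i j => if i = j then q else 1),
    sum_exchange_apply N (fun i j => if i < j then q - q⁻¹ else 0)]
  simp [Fin.ext_iff]

lemma Pmat_mul_apply (N : ℕ) (X : Matrix (Fin N × Fin N) (Fin N × Fin N) ℂ) (a b : Fin N)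
    (p : Fin N × Fin N) : (Pmat N * X) (a, b) p = X (b, a) p := by
  rw [Matrix.mul_apply, Finset.sum_eq_single (b, a)]
  · simp [Pmat_apply]
  · rintro ⟨c, d⟩ _ h
    rw [Pmat_apply, if_neg, zero_mul]
    rintro ⟨rfl, rfl⟩; exact h rfl
  · simp

lemma mul_Pmat_apply (N : ℕ) (X : Matrix (Fin N × Fin N) (Fin N × Fin N) ℂ) (a b : Fin N)
    (p : Fin N × Fin N) : (X * Pmat N) p (a, b) = X p (b, a) := by
  rw [Matrix.mul_apply, Finset.sum_eq_single (b, a)]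
  · simp [Pmat_apply]
  · rintro ⟨c, d⟩ _ h
    rw [Pmat_apply, if_neg, mul_zero]
    rintro ⟨rfl, rfl⟩; exact h rfl
  · simp

lemma Pmat_sq (N : ℕ) : Pmat N * Pmat N = 1 := by
  ext ⟨a, b⟩ ⟨c, d⟩
  rw [Pmat_mul_apply, Pmat_apply, Matrix.one_apply]
  simp only [Prod.mk.injEq]
  exact if_congr and_comm rfl rfl

lemma M2_apply (N : ℕ) (X : Matrix (Fin N) (Fin N) ℂ) (a b c d : Fin N) :
    M2 N X (a, b) (c, d) = if a = c then X b d else 0 := by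
  simp [M2, Matrix.one_apply]

lemma M1_conj (N : ℕ) (X : Matrix (Fin N) (Fin N) ℂ) :
    Pmat N * M1 N X * Pmat N = M2 N X := by
  ext ⟨a, b⟩ ⟨c, d⟩
  rw [mul_Pmat_apply, Pmat_mul_apply, M2_apply, M1]
  simp [Matrix.one_apply]

/-! ### The Hecke generator -/

/-- The braid-type operator `P R_q`, which satisfies the Hecke relation. -/
def Tmat (N : ℕ) (q : ℂ) : Matrix (Fin N × Fin N) (Fin N × Fin N) ℂ := Pmat N * Rconst N q

/-- `P R_{q⁻¹} P` is the inverse of `R_q`; this is its Hecke relation. -/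
lemma Rconst_sub (N : ℕ) (q : ℂ) :
    Pmat N * Rconst N q⁻¹ * Pmat N = Rconst N q - (q - q⁻¹) • Pmat N := by
  ext ⟨a, b⟩ ⟨c, d⟩
  rw [mul_Pmat_apply, Pmat_mul_apply, Matrix.sub_apply, Matrix.smul_apply, Rconst_apply,
    Rconst_apply, Pmat_apply, inv_inv, smul_eq_mul]
  grind

/-- Baxterization of `R(x)`: up to a scalar, `P R(x)` is affine in the Hecke generator. -/
lemma Pmat_mul_RBJ (N : ℕ) (q x : ℂ) (hq : q ≠ 0) (hx : x ≠ 0) :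
    Pmat N * RBJ N q x =
      fBJ q x • ((1 - x) • Tmat N q + (x * (q - q⁻¹)) •
        (1 : Matrix (Fin N × Fin N) (Fin N × Fin N) ℂ)) := by
  -- at `x = q²` both sides are `0` by the convention `0⁻¹ = 0`
  have hf : fBJ q⁻¹ x⁻¹ = -x * fBJ q x := by
    have e : q⁻¹ - q⁻¹⁻¹ * x⁻¹ = -(x⁻¹) * (q - q⁻¹ * x) := by field_simp; ring
    rw [fBJ, fBJ, e, mul_inv, inv_neg, inv_inv]
  rw [RBJ, Rconst_sub, hf, ← Pmat_sq N, Tmat]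
  simp only [mul_add, mul_sub, mul_smul_comm, smul_sub, smul_add, smul_smul]
  module

lemma M2_mul (N : ℕ) (X Y : Matrix (Fin N) (Fin N) ℂ) : M2 N X * M2 N Y = M2 N (X * Y) := by
  simp [M2, ← Matrix.mul_kronecker_mul]

lemma M2_one_add_smul (N : ℕ) (c : ℂ) (Z : Matrix (Fin N) (Fin N) ℂ) :
    M2 N (1 + c • Z) = 1 + c • M2 N Z := by
  simp [M2, Matrix.kronecker_add, Matrix.kronecker_smul]

lemma Tmat_apply (N : ℕ) (q : ℂ) (a b c d : Fin N) :
    Tmat N q (a, b) (c, d) = (if b = c ∧ a = d then (if a = b then q else 1) else 0) +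
      (if a = c ∧ b = d then (if b < a then q - q⁻¹ else 0) else 0) := by
  rw [Tmat, Pmat_mul_apply, Rconst_apply]
  congr 1
  · simp only [eq_comm (a := b) (b := a)]
  · exact if_congr and_comm rfl rfl

lemma mul_Tmat_apply (N : ℕ) (q : ℂ) (X : Matrix (Fin N × Fin N) (Fin N × Fin N) ℂ)
    (p : Fin N × Fin N) (c d : Fin N) :
    (X * Tmat N q) p (c, d) = X p (d, c) * (if c = d then q else 1) +
      X p (c, d) * (if d < c then q - q⁻¹ else 0) := by
  rw [Matrix.mul_apply, Fintype.sum_prod_type]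
  simp only [Tmat_apply, mul_add, Finset.sum_add_distrib, ite_and, mul_ite, mul_zero,
    Finset.sum_ite_eq', Finset.mem_univ, if_true, eq_comm (a := d)]
  simp only [Finset.sum_ite_irrel, Finset.sum_const_zero, Finset.sum_ite_eq', Finset.mem_univ,
    if_true]

lemma Tmat_sq (N : ℕ) (q : ℂ) (hq : q ≠ 0) :
    Tmat N q * Tmat N q = (q - q⁻¹) • Tmat N q + 1 := by
  ext ⟨a, b⟩ ⟨c, d⟩
  rw [mul_Tmat_apply, Matrix.add_apply, Matrix.smul_apply]
  simp only [Tmat_apply, Matrix.one_apply, smul_eq_mul, Prod.mk.injEq]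
  have hqq : q * q = (q - q⁻¹) * q + 1 := by field_simp; ring
  rcases lt_trichotomy a b with h | rfl | h
  · have := h.ne; have := h.ne'; have := h.not_gt; have := h.not_ge
    by_cases h1 : a = c <;> by_cases h2 : b = d <;> by_cases h3 : a = d <;>
      by_cases h4 : b = c <;> simp_all [add_comm]
  · by_cases h1 : a = c <;> by_cases h2 : a = d <;> simp_all
  · have := h.ne; have := h.ne'; have := h.not_gt; have := h.not_ge
    by_cases h1 : a = c <;> by_cases h2 : b = d <;> by_cases h3 : a = d <;>
      by_cases h4 : b = c <;> simp_all [add_comm]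

/-! ### Triangular patterns -/

/-- The order-theoretic content of a triangular pattern: `L` marks the indices `> m`, `t i` is the
larger element of the orbit of `i` when that orbit meets `L`, and `r i j` says that the `(i, j)`
entry of the projection is `1`. Blocks have at most two elements, and are nested. -/
structure TriPattern {N : ℕ} (L : Fin N → Prop) (t : Fin N → Fin N) (r : Fin N → Fin N → Prop) :
    Prop where
  orbit : ∀ i j, r i j → t i = t j
  top_mem : ∀ i j, r i j → L (t i)
  top_eq : ∀ i, L i → t i = i
  diag_iff : ∀ i, r i i ↔ L i
  low_lt : ∀ i j, ¬ L i → L j → i < j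
  nested : ∀ i j, L (t i) → L (t j) → ¬ L i → ¬ L j → t i < t j → j < i
  low_unique : ∀ i j, L (t i) → ¬ L i → ¬ L j → t i = t j → i = j
  mem_or : ∀ i j, r i j → L i ∨ L j
  antisymm : ∀ i j, r i j → r j i → i = j

namespace TriPattern

variable {N : ℕ} {L : Fin N → Prop} {t : Fin N → Fin N} {r : Fin N → Fin N → Prop}

/-- The middle index of two composable entries is the top of the block of `b`; the product of the
two entries is then the entry `(b, d)`. -/
lemma comp_iff (h : TriPattern L t r) (b e d : Fin N) :
    r b e ∧ r e d ↔ e = t b ∧ r b d := by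
  obtain ⟨h1, h2, h3, h4, h5, h6, h7, h8, h9⟩ := h
  constructor
  · rintro ⟨hb, hd⟩
    by_cases he : L e
    · have hbe : e = t b := by rw [h1 _ _ hb, h3 _ he]
      refine ⟨hbe, ?_⟩
      by_cases hbL : L b
      · rw [h3 _ hbL] at hbe; rwa [hbe] at hd
      by_cases hdL : L d
      · have : e = d := by rw [← h3 _ he, h1 _ _ hd, h3 _ hdL]
        rwa [this] at hb
      have : b = d := h7 b d (h2 _ _ hb) hbL hdL (by rw [h1 _ _ hb, h1 _ _ hd])
      subst this
      exact absurd (h9 _ _ hb hd ▸ he) hbL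
    · have hbL := (h8 _ _ hb).resolve_right he
      have hdL := (h8 _ _ hd).resolve_left he
      have : b = d := by rw [← h3 _ hbL, ← h3 _ hdL, h1 _ _ hb, h1 _ _ hd]
      subst this
      exact absurd (h9 _ _ hb hd ▸ hbL) he
  · rintro ⟨rfl, hd⟩
    have hL := h2 _ _ hd
    rcases h8 _ _ hd with hb | hb
    · rw [h3 _ hb]; exact ⟨(h4 b).2 hb, hd⟩
    · rw [h1 _ _ hd, h3 _ hb]; exact ⟨hd, (h4 d).2 hb⟩

/-- Partial sums `∑ Z_{be} Z_{ed}` over the `e` with `p e`: only the top of the block of `b`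
contributes. -/
lemma sum_comp [DecidableRel r] (h : TriPattern L t r) (b d : Fin N) (p : Fin N → Prop)
    [DecidablePred p] :
    (∑ e, if p e then (if r b e then (1 : ℂ) else 0) * (if r e d then 1 else 0) else 0) =
      if r b d ∧ p (t b) then 1 else 0 := by
  rw [Finset.sum_eq_single (t b)]
  · have := h.comp_iff b (t b) d
    by_cases hp : p (t b) <;> by_cases h1 : r b d <;> simp_all
    tauto
  · intro e _ he
    have := h.comp_iff b e d
    split_ifs <;> simp
    tauto
  · simp

end TriPattern

/-! ### The constant reflection equation -/

lemma Tmat_mul_apply (N : ℕ) (q : ℂ) (X : Matrix (Fin N × Fin N) (Fin N × Fin N) ℂ)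
    (p : Fin N × Fin N) (a b : Fin N) :
    (Tmat N q * X) (a, b) p = (if a = b then q else 1) * X (b, a) p +
      (if b < a then q - q⁻¹ else 0) * X (a, b) p := by
  rw [Matrix.mul_apply, Fintype.sum_prod_type]
  simp only [Tmat_apply, add_mul, Finset.sum_add_distrib, ite_and, ite_mul, zero_mul,
    Finset.sum_ite_eq, Finset.mem_univ, if_true, Finset.sum_ite_irrel, Finset.sum_const_zero]

lemma mul_M2_apply (N : ℕ) (X : Matrix (Fin N × Fin N) (Fin N × Fin N) ℂ)
    (Z : Matrix (Fin N) (Fin N) ℂ) (p : Fin N × Fin N) (c d : Fin N) :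
    (X * M2 N Z) p (c, d) = ∑ e, X p (c, e) * Z e d := by
  rw [Matrix.mul_apply, Fintype.sum_prod_type, Finset.sum_eq_single c]
  · simp [M2_apply]
  · intro x _ hx; simp [M2_apply, hx]
  · simp

lemma M2_mul_apply (N : ℕ) (X : Matrix (Fin N × Fin N) (Fin N × Fin N) ℂ)
    (Z : Matrix (Fin N) (Fin N) ℂ) (p : Fin N × Fin N) (a b : Fin N) :
    (M2 N Z * X) (a, b) p = ∑ e, Z b e * X (a, e) p := by
  rw [Matrix.mul_apply, Fintype.sum_prod_type, Finset.sum_eq_single a]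
  · simp [M2_apply]
  · intro x _ hx; simp [M2_apply, hx.symm]
  · simp

lemma TZT_apply (N : ℕ) (q : ℂ) (Z : Matrix (Fin N) (Fin N) ℂ) (a b c d : Fin N) :
    (Tmat N q * M2 N Z * Tmat N q) (a, b) (c, d) =
      ((if a = b then q else 1) * (if b = d then Z a c else 0) +
        (if b < a then q - q⁻¹ else 0) * (if a = d then Z b c else 0)) * (if c = d then q else 1) +
      ((if a = b then q else 1) * (if b = c then Z a d else 0) +
        (if b < a then q - q⁻¹ else 0) * (if a = c then Z b d else 0)) *
          (if d < c then q - q⁻¹ else 0) := by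
  rw [mul_Tmat_apply, Tmat_mul_apply, Tmat_mul_apply]
  simp only [M2_apply]

namespace TriPattern

variable {N : ℕ} {L : Fin N → Prop} {t : Fin N → Fin N} {r : Fin N → Fin N → Prop}

lemma idem [DecidableRel r] (h : TriPattern L t r) (Z : Matrix (Fin N) (Fin N) ℂ)
    (hZ : ∀ i j, Z i j = if r i j then 1 else 0) : Z * Z = Z := by
  ext b d
  have := h.sum_comp b d (fun _ => True)
  simpa [Matrix.mul_apply, hZ] using this

/-- Entries of `T Z₂ T Z₂`. The first two terms come from the part of the second `T` that exchanges
the tensor factors, the last two from its diagonal part. -/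
lemma TZTZ_apply [DecidableRel r] (h : TriPattern L t r) (q : ℂ) (Z : Matrix (Fin N) (Fin N) ℂ)
    (hZ : ∀ i j, Z i j = if r i j then 1 else 0) (a b c d : Fin N) :
    (Tmat N q * M2 N Z * Tmat N q * M2 N Z) (a, b) (c, d) =
      (if a = b then q else 1) * (if c = b then q else 1) * Z a c * Z b d
      + (if b < a then q - q⁻¹ else 0) * (if c = a then q else 1) * Z b c * Z a d
      + (if a = b then q else 1) * (if b = c then 1 else 0) * (q - q⁻¹) *
          (if r a d ∧ t a < c then 1 else 0)
      + (if b < a then q - q⁻¹ else 0) * (if a = c then 1 else 0) * (q - q⁻¹) *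
          (if r b d ∧ t b < c then 1 else 0) := by
  rw [mul_M2_apply, ← h.sum_comp a d (· < c), ← h.sum_comp b d (· < c)]
  simp only [TZT_apply, ← hZ]
  have e1 : (if a = b then q else 1) * (if c = b then q else 1) * Z a c * Z b d =
      ∑ e, if b = e then (if a = b then q else 1) * (if c = e then q else 1) * Z a c * Z e d
        else 0 := by simp
  have e2 : (if b < a then q - q⁻¹ else 0) * (if c = a then q else 1) * Z b c * Z a d =
      ∑ e, if a = e then (if b < a then q - q⁻¹ else 0) * (if c = e then q else 1) * Z b c * Z e d
        else 0 := by simp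
  rw [e1, e2, Finset.mul_sum, Finset.mul_sum, ← Finset.sum_add_distrib, ← Finset.sum_add_distrib,
    ← Finset.sum_add_distrib]
  refine Finset.sum_congr rfl fun e _ => ?_
  simp only [mul_ite, ite_mul, mul_zero, zero_mul]
  grind

/-- Entries of `Z₂ T Z₂ T`, grouped in the same way by the two parts of the first `T`. -/
lemma ZTZT_apply [DecidableRel r] (h : TriPattern L t r) (q : ℂ) (Z : Matrix (Fin N) (Fin N) ℂ)
    (hZ : ∀ i j, Z i j = if r i j then 1 else 0) (a b c d : Fin N) :
    (M2 N Z * (Tmat N q * M2 N Z * Tmat N q)) (a, b) (c, d) =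
      (if c = d then q else 1) * (if a = d then q else 1) * Z a c * Z b d
      + (if d < c then q - q⁻¹ else 0) * (if a = c then q else 1) * Z b c * Z a d
      + (if c = d then q else 1) * (if a = d then 1 else 0) * (q - q⁻¹) *
          (if r b c ∧ t b < a then 1 else 0)
      + (if d < c then q - q⁻¹ else 0) * (if a = c then 1 else 0) * (q - q⁻¹) *
          (if r b d ∧ t b < a then 1 else 0) := by
  rw [M2_mul_apply, ← h.sum_comp b c (· < a), ← h.sum_comp b d (· < a)]
  simp only [TZT_apply, ← hZ]
  have e1 : (if c = d then q else 1) * (if a = d then q else 1) * Z a c * Z b d =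
      ∑ e, if e = d then (if c = d then q else 1) * (if a = e then q else 1) * Z a c * Z b e
        else 0 := by simp
  have e2 : (if d < c then q - q⁻¹ else 0) * (if a = c then q else 1) * Z b c * Z a d =
      ∑ e, if e = c then (if d < c then q - q⁻¹ else 0) * (if a = e then q else 1) * Z b e * Z a d
        else 0 := by simp
  rw [e1, e2, Finset.mul_sum, Finset.mul_sum, ← Finset.sum_add_distrib, ← Finset.sum_add_distrib,
    ← Finset.sum_add_distrib]
  refine Finset.sum_congr rfl fun e _ => ?_
  simp only [mul_ite, ite_mul, mul_zero, zero_mul]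
  grind

end TriPattern

set_option maxHeartbeats 8000000 in
/-- The constant reflection equation for the projection of a triangular pattern. Both sides have
closed forms, which are compared entry by entry according to the coincidences among the four
indices; nestedness of the blocks decides the comparisons `t a < c` and `t b < a`. -/
lemma TriPattern.reflection {N : ℕ} {L : Fin N → Prop} {t : Fin N → Fin N}
    {r : Fin N → Fin N → Prop} [DecidableRel r] (h : TriPattern L t r)
    (q : ℂ) (hq : q ≠ 0) (Z : Matrix (Fin N) (Fin N) ℂ)
    (hZ : ∀ i j, Z i j = if r i j then 1 else 0) :
    Tmat N q * M2 N Z * Tmat N q * M2 N Z = M2 N Z * Tmat N q * M2 N Z * Tmat N q := by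
  ext ⟨a, b⟩ ⟨c, d⟩
  rw [h.TZTZ_apply q Z hZ, mul_assoc (M2 N Z), mul_assoc (M2 N Z),
    h.ZTZT_apply q Z hZ]
  simp only [hZ]
  have hqq : q * q = (q - q⁻¹) * q + 1 := by field_simp; ring
  -- beyond this point only `hqq` relates `q - q⁻¹` to `q`
  generalize q - q⁻¹ = l at *
  have hc := fun b e d => (h.comp_iff b e d).1
  obtain ⟨h1, h2, h3, h4, h5, h6, h7, h8, h9⟩ := h
  clear hZ hq Z
  by_cases hac : a = c
  · subst hac
    by_cases hbd : b = d
    · subst hbd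
      grind
    · grind
  · by_cases hbd : b = d
    · subst hbd
      simp only [hac, Ne.symm hac, if_false]
      by_cases hab : a = b
      · subst hab; grind
      by_cases hbc : b = c
      · subst hbc; grind
      simp only [hab, hbc, Ne.symm hbc, if_false]
      by_cases x1 : r b c
      · by_cases x2 : r a b
        · grind
        · simp [x2]
      · simp [x1]
    · simp only [hac, Ne.symm hac, if_false]
      by_cases hab : a = b
      · subst hab
        by_cases hcd : c = d
        · subst hcd; grind
        · grind
      · by_cases hcd : c = d
        · subst hcd
          grind
        · by_cases had : a = d
          · subst had
            by_cases hbc : b = c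
            · subst hbc
              grind
            · grind
          · by_cases hbc : b = c
            · subst hbc
              grind
            · grind

/-- A projection `Z` solving the constant reflection equation gives a solution `1 + c(w) Z`. -/
lemma REeq_of_braid (N : ℕ) (q : ℂ) (hq : q ≠ 0) (Z : Matrix (Fin N) (Fin N) ℂ)
    (hZ : Z * Z = Z)
    (hTZ : Tmat N q * M2 N Z * Tmat N q * M2 N Z = M2 N Z * Tmat N q * M2 N Z * Tmat N q)
    (α u v : ℂ) (hu : u ≠ 0) (hv : v ≠ 0) (hKu : α - u ≠ 0) (hKv : α - v ≠ 0) :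
    REeq N q (fun w => 1 + ((w - w⁻¹) / (α - w)) • Z) u v := by
  have hR (x : ℂ) : RBJ N q x = Pmat N * (Pmat N * RBJ N q x) := by
    rw [← mul_assoc, Pmat_sq, one_mul]
  have key := braid_form (Tmat N q) (M2 N Z) (q - q⁻¹) (u / v) (u * v)
    ((u - u⁻¹) / (α - u)) ((v - v⁻¹) / (α - v)) (Tmat_sq N q hq) (by rw [M2_mul, hZ]) hTZ
    (by field_simp; ring)
  have hl : R21 N q (u / v) * M1 N (1 + ((u - u⁻¹) / (α - u)) • Z) * RBJ N q (u * v) *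
      M2 N (1 + ((v - v⁻¹) / (α - v)) • Z) = (Pmat N * RBJ N q (u / v)) *
      (Pmat N * M1 N (1 + ((u - u⁻¹) / (α - u)) • Z) * Pmat N) * (Pmat N * RBJ N q (u * v)) *
      M2 N (1 + ((v - v⁻¹) / (α - v)) • Z) := by
    rw [R21, hR (u * v)]
    simp only [mul_assoc, ← mul_assoc (Pmat N) (Pmat N), Pmat_sq, one_mul]
  have hr : M2 N (1 + ((v - v⁻¹) / (α - v)) • Z) * R21 N q (u * v) *
      M1 N (1 + ((u - u⁻¹) / (α - u)) • Z) * RBJ N q (u / v) =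
      M2 N (1 + ((v - v⁻¹) / (α - v)) • Z) * (Pmat N * RBJ N q (u * v)) *
      (Pmat N * M1 N (1 + ((u - u⁻¹) / (α - u)) • Z) * Pmat N) * (Pmat N * RBJ N q (u / v)) := by
    rw [R21, hR (u / v)]
    simp only [mul_assoc, ← mul_assoc (Pmat N) (Pmat N), Pmat_sq, one_mul]
  rw [REeq, hl, hr, M1_conj, Pmat_mul_RBJ N q _ hq (div_ne_zero hu hv),
    Pmat_mul_RBJ N q _ hq (mul_ne_zero hu hv),
    M2_one_add_smul, M2_one_add_smul]
  simp only [smul_mul_assoc, mul_smul_comm, key, smul_smul, mul_comm]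

/-! ### From triangular involutions to patterns -/

/-- A triangular involution `s` with an antisymmetric choice `E` of one off-diagonal entry per
nontrivial orbit yields a triangular pattern. -/
lemma triPattern_of_involution {N : ℕ} (L : Fin N → Prop) [DecidablePred L] (s : Fin N → Fin N)
    (E : Fin N → Fin N → Prop) (hss : ∀ i, s (s i) = i)
    (hL : ∀ i j, ¬ L i → L j → i < j)
    (hlow : ∀ i, L i → s i ≠ i → ¬ L (s i))
    (hord : ∀ i j, L i → L j → i < j → s i ≠ i → s j ≠ j → s j < s i)
    (hdiag : ∀ i, ¬ E i i)
    (hE : ∀ i j, E i j → E j i → i = j) :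
    TriPattern L (fun i => if L i then i else s i)
      (fun i j => (L i ∧ i = j) ∨ (s i = j ∧ E i j ∧ (L i ∨ L j))) where
  orbit := by grind
  top_mem := by grind
  top_eq := by grind
  diag_iff := by grind
  low_lt := hL
  nested := by
    intro i j hi hj hi' hj' h
    simp only [hi', hj', if_false] at hi hj h
    have := hord (s i) (s j) hi hj h
    rw [hss, hss] at this
    exact this (by rintro e; rw [← e] at hi; exact hi' hi) (by rintro e; rw [← e] at hj; exact hj' hj)
  low_unique := by
    intro i j hi hi' hj' h
    simp only [hi', hj', if_false] at h
    rw [← hss i, h, hss]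
  mem_or := by grind
  antisymm := by grind

/-- Entries of the sum of matrix units. The two off-diagonal terms are indexed by the orbits of `i`
and of `j` respectively, and both involve the coefficient at `(i, j)`. -/
lemma sum_Em_apply (N m : ℕ) (σ : ℕ → ℕ) (ε : ℕ → ℕ → ℂ) (i j : Fin N) :
    (∑ k ∈ Finset.Icc (m + 1) N,
      (Em N k k + ε k (σ k) • Em N k (σ k) + ε (σ k) k • Em N (σ k) k)) i j =
    (if m < (i : ℕ) + 1 ∧ i = j then 1 else 0) +
    (if m < (i : ℕ) + 1 ∧ σ (i + 1) = j + 1 then ε (i + 1) (j + 1) else 0) +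
    (if m < (j : ℕ) + 1 ∧ σ (j + 1) = i + 1 then ε (i + 1) (j + 1) else 0) := by
  simp only [Matrix.sum_apply, Matrix.add_apply, Matrix.smul_apply, Em_apply, smul_eq_mul,
    Finset.sum_add_distrib]
  have hpick (a : Fin N) (f : ℕ → ℂ) (hf : ∀ k, k ≠ (a : ℕ) + 1 → f k = 0) :
      ∑ k ∈ Finset.Icc (m + 1) N, f k = if m < (a : ℕ) + 1 then f (a + 1) else 0 := by
    split_ifs with h
    · exact Finset.sum_eq_single_of_mem _ (Finset.mem_Icc.2 ⟨by omega, by omega⟩)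
        fun k _ hk => hf k hk
    · refine Finset.sum_eq_zero fun k hk => hf k ?_
      rw [Finset.mem_Icc] at hk; omega
  rw [hpick i, hpick i, hpick j]
  · simp only [Fin.ext_iff]; grind
  all_goals intro k hk; grind

/-- The sum of indicators from `sum_Em_apply` as a single indicator: `A` and `B` say that `i` and `j`
exceed `m`, `D` that `i = j`, `S` that the involution exchanges `i` and `j`, and `e` is the
coefficient at `(i, j)`. -/
lemma entry_eq (A B D S : Prop) (e : ℂ) [Decidable (A ∧ D)] [Decidable (A ∧ S)]
    [Decidable (B ∧ S)] [Decidable ((A ∧ D) ∨ (S ∧ (S ∧ e = 1) ∧ (A ∨ B)))]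
    (he : e = 0 ∨ e = 1) (hD : D → e = 0) (hlow : A → B → S → D) :
    (if A ∧ D then (1 : ℂ) else 0) + (if A ∧ S then e else 0) + (if B ∧ S then e else 0) =
      if (A ∧ D) ∨ (S ∧ (S ∧ e = 1) ∧ (A ∨ B)) then 1 else 0 := by
  by_cases hA : A <;> by_cases hB : B <;> by_cases hd : D <;> by_cases hS : S <;>
    rcases he with rfl | rfl <;> simp_all

/-- the canonical triangular solution
`K(u) = I + ((u-u⁻¹)/(α-u)) Σ_{m<i≤N} ( E_{ii} + ε_{i,σ(i)} E_{i,σ(i)} + ε_{σ(i),i} E_{σ(i),i} )`,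
for `(m, σ) ∈ Σ^tri_N` and admissible `ε`, satisfies the untwisted reflection
equation (RE) for all `u, v` for which all factors are defined. -/
theorem statement14 (N : ℕ) (hN : 2 ≤ N) (q : ℂ) (hq : q ≠ 0)
    (m : ℕ) (hm1 : N ≤ 2 * m) (hm2 : m ≤ N)
    (σ : ℕ → ℕ)
    (hσmem : ∀ i ∈ Finset.Icc 1 N, σ i ∈ Finset.Icc 1 N)
    (hσinv : ∀ i ∈ Finset.Icc 1 N, σ (σ i) = i)
    (hσfix : ∀ i ∈ Finset.Icc 1 N, i ≤ m → (∀ j, m < j → j ≤ N → σ j ≠ i) → σ i = i)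
    (hσord : ∀ i j : ℕ, m < i → i ≤ j → j ≤ N → σ i ≠ i → σ j ≠ j →
      0 < σ j ∧ σ j ≤ σ i ∧ σ i ≤ m)
    (ε : ℕ → ℕ → ℂ)
    (hε01 : ∀ i j : ℕ, ε i j = 0 ∨ ε i j = 1)
    (hεdiag : ∀ i : ℕ, ε i i = 0)
    (hεsum : ∀ i ∈ Finset.Icc 1 N, σ i ≠ i → ε i (σ i) + ε (σ i) i = 1)
    (α : ℂ) (u v : ℂ) (hu : u ≠ 0) (hv : v ≠ 0)
    (h1 : u / v ≠ q ^ 2) (h2 : u / v ≠ q⁻¹ ^ 2)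
    (h3 : u * v ≠ q ^ 2) (h4 : u * v ≠ q⁻¹ ^ 2)
    (hKu : α - u ≠ 0) (hKv : α - v ≠ 0) :
    REeq N q
      (fun w => 1 + ((w - w⁻¹) / (α - w)) •
        ∑ i ∈ Finset.Icc (m + 1) N,
          (Em N i i + ε i (σ i) • Em N i (σ i) + ε (σ i) i • Em N (σ i) i))
      u v := by
  classical
  have hmem (i : Fin N) : 1 ≤ σ (i + 1) ∧ σ (i + 1) ≤ N :=
    Finset.mem_Icc.1 (hσmem _ (Finset.mem_Icc.2 ⟨by omega, by omega⟩))
  have hinv (i : Fin N) : σ (σ (i + 1)) = i + 1 :=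
    hσinv _ (Finset.mem_Icc.2 ⟨by omega, by omega⟩)
  have hsum (i : Fin N) (h : σ (i + 1) ≠ i + 1) :
      ε (i + 1) (σ (i + 1)) + ε (σ (i + 1)) (i + 1) = 1 :=
    hεsum _ (Finset.mem_Icc.2 ⟨by omega, by omega⟩) h
  -- the involution on `Fin N`, with indices shifted by one
  obtain ⟨s, hs⟩ : ∃ s : Fin N → Fin N, ∀ i, (s i : ℕ) + 1 = σ (i + 1) :=
    ⟨fun i => ⟨σ (i + 1) - 1, by have := hmem i; omega⟩, fun i => by
      have := hmem i; simp only; omega⟩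
  have hs_eq (i j : Fin N) : σ (i + 1) = j + 1 ↔ s i = j := by
    rw [← hs, Fin.ext_iff]; omega
  have hss (i : Fin N) : s (s i) = i := by
    rw [← hs_eq, hs, hinv]
  have hpat := triPattern_of_involution (fun i : Fin N => m < (i : ℕ) + 1) s
    (fun i j => s i = j ∧ ε (i + 1) (j + 1) = 1) hss
    (by intro i j hi hj; rw [Fin.lt_def]; omega)
    (by
      intro i hi h
      rw [Ne, ← hs_eq] at h
      rw [hs, not_lt]
      exact (hσord _ _ hi le_rfl (by omega) h h).2.2)
    (by
      intro i j hi hj hij hsi hsj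
      rw [Ne, ← hs_eq] at hsi hsj
      have h := (hσord (i + 1) (j + 1) hi (by omega) (by omega) hsi hsj).2.1
      rw [← hs, ← hs, Nat.add_le_add_iff_right] at h
      refine lt_of_le_of_ne h fun e => hij.ne ?_
      rw [← hss i, ← hss j, e])
    (by intro i ⟨_, h⟩; simp [hεdiag] at h)
    (by
      rintro i j ⟨rfl, h⟩ ⟨_, h'⟩
      by_contra hne
      have := hsum i (by rw [Ne, hs_eq]; exact fun e => hne e.symm)
      rw [← hs, h, h'] at this
      norm_num at this)
  refine REeq_of_braid N q hq _ (hpat.idem _ ?_) (hpat.reflection q hq _ ?_) α u v hu hv hKu hKv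
  all_goals
    intro i j
    rw [sum_Em_apply]
    have hsym : s j = i ↔ s i = j := ⟨fun h => by rw [← h, hss], fun h => by rw [← h, hss]⟩
    have h01 := hε01 (i + 1) (j + 1)
    have hd : i = j → ε (i + 1) (j + 1) = 0 := by rintro rfl; exact hεdiag _
    have hlow : m < (i : ℕ) + 1 → m < (j : ℕ) + 1 → s i = j → i = j := by
      rintro hi hj rfl
      by_contra hne
      have hne' : σ (i + 1) ≠ i + 1 := by rw [Ne, hs_eq]; exact fun e => hne e.symm
      have := (hσord _ _ hi le_rfl (by omega) hne' hne').2.2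
      rw [← hs] at this; omega
    simp only [hs_eq, hsym]
    exact entry_eq _ _ _ _ _ h01 hd hlow

end
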